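/- There is a constant C such that for every h ∈ C^∞(ℝ³) and every R > 1: sup_{R/2 < |x| < R} |h(x)| ≤ C R^{−1} Σ_{|α| ≤ 2} ‖Z^α h‖_{L²(R/4 < |x| < 2R)}, where the sum is over all products Z^α of at most 2 vector fields from Z. -/

import Mathlib

noncomputable section

open MeasureTheory Real Set

abbrev E3 : Type := EuclideanSpace ℝ (Fin 3)

/-- Japanese bracket `⟨s⟩ = (1+s²)^{1/2}`. -/
def jb (s : ℝ) : ℝ := Real.sqrt (1 + s ^ 2)

/-- Time derivative `∂_t`. -/
def pdt (w : ℝ → E3 → ℝ) : ℝ → E3 → ℝ := fun t x => deriv (fun s => w s x) t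

/-- Spatial partial derivative `∂_i`. -/
def pdx (i : Fin 3) (w : ℝ → E3 → ℝ) : ℝ → E3 → ℝ :=
  fun t x => fderiv ℝ (fun y => w t y) x (EuclideanSpace.single i 1)

/-- Space-time derivative `∂_α`, with `α = 0` the time derivative. -/
def pd (α : Fin 4) : (ℝ → E3 → ℝ) → ℝ → E3 → ℝ :=
  if h : α = 0 then pdt else pdx (α.pred h)

/-- Radial derivative `∂_r`. -/
def pdr (w : ℝ → E3 → ℝ) : ℝ → E3 → ℝ :=
  fun t x => ∑ i : Fin 3, (x i / ‖x‖) * pdx i w t x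

/-- Scaling vector field `L = t∂_t + r∂_r`. -/
def Lop (w : ℝ → E3 → ℝ) : ℝ → E3 → ℝ :=
  fun t x => t * pdt w t x + ∑ i : Fin 3, x i * pdx i w t x

/-- Rotation vector fields `Ω_{ij} = x_i ∂_j - x_j ∂_i`. -/
def rot (i j : Fin 3) (w : ℝ → E3 → ℝ) : ℝ → E3 → ℝ :=
  fun t x => x i * pdx j w t x - x j * pdx i w t x

/-- The eight admissible vector fields `Γ = {L, Ω_{ij}, ∂_k}`. -/
def gam (k : Fin 8) : (ℝ → E3 → ℝ) → ℝ → E3 → ℝ :=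
  if k = 0 then Lop else if k = 1 then rot 0 1 else if k = 2 then rot 0 2
  else if k = 3 then rot 1 2 else if k = 4 then pd 0 else if k = 5 then pd 1
  else if k = 6 then pd 2 else pd 3

/-- Iterated application of a family of operators along a word. -/
def iterOp {m : ℕ} (F : Fin m → (ℝ → E3 → ℝ) → ℝ → E3 → ℝ) :
    ∀ {n : ℕ}, (Fin n → Fin m) → (ℝ → E3 → ℝ) → ℝ → E3 → ℝ
  | 0, _, w => w
  | _ + 1, μ, w => F (μ 0) (iterOp F (fun i => μ i.succ) w)

/-- `Γ^μ`. -/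
def gamW {n : ℕ} (μ : Fin n → Fin 8) : (ℝ → E3 → ℝ) → ℝ → E3 → ℝ := iterOp gam μ

/-- `∂^μ`. -/
def pdW {n : ℕ} (μ : Fin n → Fin 4) : (ℝ → E3 → ℝ) → ℝ → E3 → ℝ := iterOp pd μ

/-- `|∂w|`: pointwise size of the full space-time gradient. -/
def aGrad (w : ℝ → E3 → ℝ) (t : ℝ) (x : E3) : ℝ := ∑ α : Fin 4, |pd α w t x|

/-- `|∂²w|`. -/
def aGrad2 (w : ℝ → E3 → ℝ) (t : ℝ) (x : E3) : ℝ :=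
  ∑ α : Fin 4, ∑ β : Fin 4, |pd α (pd β w) t x|

/-- `|Γw|`. -/
def aGam (w : ℝ → E3 → ℝ) (t : ℝ) (x : E3) : ℝ := ∑ k : Fin 8, |gam k w t x|

/-- `|∂Γw|`. -/
def aGradGam (w : ℝ → E3 → ℝ) (t : ℝ) (x : E3) : ℝ :=
  ∑ α : Fin 4, ∑ k : Fin 8, |pd α (gam k w) t x|

/-- The d'Alembertian `∂_t² - c²Δ`. -/
def dAlembert (cs : ℝ) (w : ℝ → E3 → ℝ) : ℝ → E3 → ℝ :=
  fun t x => pdt (pdt w) t x - cs ^ 2 * ∑ i : Fin 3, pdx i (pdx i w) t x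

/-- The perturbed d'Alembertian `(□_h u)^I`. -/
def boxH {D : ℕ} (c : Fin D → ℝ) (h : Fin D → Fin D → Fin 4 → Fin 4 → ℝ → E3 → ℝ)
    (u : Fin D → ℝ → E3 → ℝ) (I : Fin D) : ℝ → E3 → ℝ :=
  fun t x => dAlembert (c I) (u I) t x
    + ∑ J, ∑ α, ∑ β, h I J α β t x * pd α (pd β (u J)) t x

/-- The commutator `[P, h^{IJ,γδ}∂_γ∂_δ]u` (the `I`-th component). -/
def commPH {D : ℕ} (P : (ℝ → E3 → ℝ) → ℝ → E3 → ℝ)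
    (h : Fin D → Fin D → Fin 4 → Fin 4 → ℝ → E3 → ℝ)
    (u : Fin D → ℝ → E3 → ℝ) (I : Fin D) : ℝ → E3 → ℝ :=
  fun t x => ∑ J, ∑ γ, ∑ δ,
    (P (fun s y => h I J γ δ s y * pd γ (pd δ (u J)) s y) t x
      - h I J γ δ t x * pd γ (pd δ (P (u J))) t x)

/-- `K` has boundary which is locally the sublevel set of a `C^ord` defining
function with nonvanishing gradient. -/
def HasSmoothBoundary (K : Set E3) (ord : ℕ∞) : Prop :=
  ∀ x ∈ frontier K, ∃ (U : Set E3) (f : E3 → ℝ), IsOpen U ∧ x ∈ U ∧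
    ContDiff ℝ ord f ∧ (∀ y ∈ U, fderiv ℝ f y ≠ 0) ∧ K ∩ U = {y ∈ U | f y ≤ 0}

/-- Star-shaped with respect to the origin. -/
def StarShapedZero (K : Set E3) : Prop :=
  ∀ x ∈ K, ∀ s : ℝ, s ∈ Set.Icc (0:ℝ) 1 → s • x ∈ K

/-- Modified scaling vector field. -/
def Ltilde (η : E3 → ℝ) (w : ℝ → E3 → ℝ) : ℝ → E3 → ℝ :=
  fun t x => t * pdt w t x + η x * ∑ i : Fin 3, x i * pdx i w t x

/-- spatial derivative for functions of `x` only -/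
def sd (i : Fin 3) (f : E3 → ℝ) : E3 → ℝ :=
  fun x => fderiv ℝ f x (EuclideanSpace.single i 1)

def rotS (i j : Fin 3) (f : E3 → ℝ) : E3 → ℝ := fun x => x i * sd j f x - x j * sd i f x

def iterOpS {m : ℕ} (F : Fin m → (E3 → ℝ) → E3 → ℝ) :
    ∀ {n : ℕ}, (Fin n → Fin m) → (E3 → ℝ) → E3 → ℝ
  | 0, _, f => f
  | _ + 1, μ, f => F (μ 0) (iterOpS F (fun i => μ i.succ) f)

def sdW {n : ℕ} (μ : Fin n → Fin 3) : (E3 → ℝ) → E3 → ℝ := iterOpS sd μ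

def zS (k : Fin 6) : (E3 → ℝ) → E3 → ℝ :=
  if k = 0 then rotS 0 1 else if k = 1 then rotS 0 2 else if k = 2 then rotS 1 2
  else if k = 3 then sd 0 else if k = 4 then sd 1 else sd 2

def zSW {n : ℕ} (μ : Fin n → Fin 6) : (E3 → ℝ) → E3 → ℝ := iterOpS zS μ

def zST (k : Fin 7) : (ℝ → E3 → ℝ) → ℝ → E3 → ℝ :=
  if k = 0 then rot 0 1 else if k = 1 then rot 0 2 else if k = 2 then rot 1 2
  else if k = 3 then pd 0 else if k = 4 then pd 1 else if k = 5 then pd 2 else pd 3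

def zSTW {n : ℕ} (μ : Fin n → Fin 7) : (ℝ → E3 → ℝ) → ℝ → E3 → ℝ := iterOp zST μ


theorem aux_oneD (g g1 g2 : ℝ → ℝ) (h0 : ∀ s, HasDerivAt g (g1 s) s)
    (h1 : ∀ s, HasDerivAt g1 (g2 s) s) (hc : Continuous g2) :
    g 0 = ∫ s in (0:ℝ)..1, s * ((1 - s) ^ 2 * g2 s - 4 * (1 - s) * g1 s + 2 * g s) := by
  have cg : Continuous g := continuous_iff_continuousAt.2 fun s => (h0 s).continuousAt
  have cg1 : Continuous g1 := continuous_iff_continuousAt.2 fun s => (h1 s).continuousAt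
  have key : ∀ s ∈ Set.uIcc (0:ℝ) 1, HasDerivAt
      (fun s => s * ((1 - s) ^ 2 * g1 s - 2 * (1 - s) * g s) - (1 - s) ^ 2 * g s)
      (s * ((1 - s) ^ 2 * g2 s - 4 * (1 - s) * g1 s + 2 * g s)) s := by
    intro s _
    have hd : HasDerivAt (fun s : ℝ => 1 - s) (-1) s := by
      simpa using (hasDerivAt_id s).const_sub 1
    have := ((hasDerivAt_id s).mul (((hd.pow 2).mul (h1 s)).sub
      ((hd.const_mul 2).mul (h0 s)))).sub ((hd.pow 2).mul (h0 s))
    refine HasDerivAt.congr_deriv this ?_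
    simp only [Pi.sub_apply, Pi.mul_apply, Pi.pow_apply, id]
    norm_num
    ring
  rw [intervalIntegral.integral_eq_sub_of_hasDerivAt key]
  · simp
  · apply Continuous.intervalIntegrable
    fun_prop

theorem aux_oneD_bound (g g1 g2 G : ℝ → ℝ) (h0 : ∀ s, HasDerivAt g (g1 s) s)
    (h1 : ∀ s, HasDerivAt g1 (g2 s) s) (hc : Continuous g2) (hG : Continuous G)
    (b0 : ∀ s, |g s| ≤ G s) (b1 : ∀ s, |g1 s| ≤ G s) (b2 : ∀ s, |g2 s| ≤ G s) :
    |g 0| ≤ 7 * ∫ s in (0:ℝ)..1, s * G s := by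
  rw [aux_oneD g g1 g2 h0 h1 hc, ← intervalIntegral.integral_const_mul]
  rw [← Real.norm_eq_abs]
  apply intervalIntegral.norm_integral_le_of_norm_le zero_le_one
  · refine Filter.Eventually.of_forall fun s hs => ?_
    have hs0 := hs.1.le
    have hs1 : 0 ≤ 1 - s := by linarith [hs.2]
    have hs2 : 1 - s ≤ 1 := by linarith
    rw [Real.norm_eq_abs, abs_mul, abs_of_nonneg hs0]
    have e1 : |(1 - s) ^ 2 * g2 s| ≤ G s := by
      rw [abs_mul, abs_of_nonneg (by positivity)]
      have : (1 - s) ^ 2 ≤ 1 := by nlinarith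
      nlinarith [abs_nonneg (g2 s), b2 s]
    have e2 : |4 * (1 - s) * g1 s| ≤ 4 * G s := by
      rw [abs_mul, abs_of_nonneg (by positivity)]
      nlinarith [abs_nonneg (g1 s), b1 s]
    have e3 : |2 * g s| ≤ 2 * G s := by
      rw [abs_mul, abs_of_nonneg (by positivity)]
      nlinarith [b0 s]
    have : |(1 - s) ^ 2 * g2 s - 4 * (1 - s) * g1 s + 2 * g s| ≤ 7 * G s := by
      rw [abs_le] at *
      constructor <;> linarith [e1.1, e1.2, e2.1, e2.2, e3.1, e3.2]
    nlinarith
  · apply Continuous.intervalIntegrable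
    fun_prop

open scoped Pointwise in
theorem aux_sob (δ : ℝ) (hδ : 0 < δ) (u0 : ℝ) (G : E3 → ℝ) (hG : Continuous G)
    (H : ∀ v ∈ Metric.ball (0 : E3) δ, |u0| ≤ 7 * ∫ s in (0:ℝ)..1, s * G (s • v)) :
    |u0| ≤ 2 * √(49 * (∫ w in Metric.ball (0 : E3) δ, G w ^ 2)
      / (volume.real (Metric.ball (0 : E3) δ))) := by
  set V := volume.real (Metric.ball (0 : E3) δ) with hV
  set I := ∫ w in Metric.ball (0 : E3) δ, G w ^ 2 with hI
  have hVpos : 0 < V := by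
    rw [hV, measureReal_def]
    exact ENNReal.toReal_pos (Metric.measure_ball_pos _ _ hδ).ne' measure_ball_lt_top.ne
  have hI0 : 0 ≤ I := integral_nonneg fun _ => sq_nonneg _
  have hGi : ∀ c : ℝ, IntegrableOn (fun w : E3 => G (c • w) ^ 2) (Metric.ball 0 δ) := by
    intro c
    apply (ContinuousOn.integrableOn_compact (K := Metric.closedBall 0 δ)
      (isCompact_closedBall _ _) (by fun_prop)).mono_set Metric.ball_subset_closedBall
  have hr : Continuous fun s : ℝ => s ^ (5/2 : ℝ) :=
    Real.continuous_rpow_const (by norm_num)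
  -- joint integrability
  have hJ : Integrable (Function.uncurry fun (v : E3) (s : ℝ) => s ^ (5/2 : ℝ) * G (s • v) ^ 2)
      ((volume.restrict (Metric.ball 0 δ)).prod (volume.restrict (Set.Ioc 0 1))) := by
    rw [Measure.prod_restrict]
    have : IntegrableOn (Function.uncurry fun (v : E3) (s : ℝ) => s ^ (5/2 : ℝ) * G (s • v) ^ 2)
        (Metric.closedBall 0 δ ×ˢ Set.Icc 0 1) (volume.prod volume) := by
      apply ContinuousOn.integrableOn_compact
      · exact (isCompact_closedBall _ _).prod isCompact_Icc
      · apply Continuous.continuousOn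
        simp only [Function.uncurry_def]
        have := hr.comp (continuous_snd : Continuous fun p : E3 × ℝ => p.2)
        simp only [Function.comp_def] at this
        fun_prop
    exact this.mono_set (Set.prod_mono Metric.ball_subset_closedBall Set.Ioc_subset_Icc_self)
  have hdouble : ∫ v in Metric.ball (0 : E3) δ, ∫ s in Set.Ioc (0:ℝ) 1, s ^ (5/2 : ℝ) * G (s • v) ^ 2
      ≤ 2 * I := by
    rw [integral_integral_swap hJ]
    have hint : ∫ s in Set.Ioc (0:ℝ) 1, s ^ (-(1/2) : ℝ) * I = 2 * I := by
      rw [integral_mul_const, ← intervalIntegral.integral_of_le zero_le_one, integral_rpow]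
      · norm_num
      · left; norm_num
    rw [← hint]
    apply setIntegral_mono_on
    · exact hJ.integral_prod_right
    · apply Integrable.mul_const
      have := intervalIntegral.intervalIntegrable_rpow' (a := 0) (b := 1) (r := (-(1/2) : ℝ)) (by norm_num)
      rwa [intervalIntegrable_iff_integrableOn_Ioc_of_le zero_le_one] at this
    · exact measurableSet_Ioc
    · intro s hs
      rw [integral_const_mul]
      have h1 := Measure.setIntegral_comp_smul_of_pos (volume : Measure E3) (fun w => G w ^ 2)
        (Metric.ball 0 δ) hs.1
      rw [h1]
      have h2 : ∫ w in s • Metric.ball (0:E3) δ, G w ^ 2 ≤ I := by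
        apply setIntegral_mono_set
        · simpa using hGi 1
        · exact Filter.Eventually.of_forall fun _ => sq_nonneg _
        · apply LE.le.eventuallyLE
          rw [_root_.smul_ball hs.1.ne']
          rw [smul_zero]
          apply Metric.ball_subset_ball
          rw [Real.norm_eq_abs, abs_of_pos hs.1]
          nlinarith [hs.2]
      have h3 : s ^ (5/2 : ℝ) * (s ^ 3)⁻¹ = s ^ (-(1/2) : ℝ) := by
        rw [← Real.rpow_natCast, ← Real.rpow_neg hs.1.le, ← Real.rpow_add hs.1]
        norm_num
      rw [finrank_euclideanSpace_fin, smul_eq_mul, ← mul_assoc, h3]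
      exact mul_le_mul_of_nonneg_left h2 (Real.rpow_nonneg hs.1.le _)
  have hε : ∀ ε : ℝ, 0 < ε → |u0| ≤ ε + (49 * I / V) / ε := by
    intro ε he
    have hpt : ∀ v ∈ Metric.ball (0 : E3) δ,
        |u0| ≤ ε + 49 / (2 * ε) * ∫ s in Set.Ioc (0:ℝ) 1, s ^ (5/2 : ℝ) * G (s • v) ^ 2 := by
      intro v hv
      refine (H v hv).trans ?_
      have i1 : IntervalIntegrable (fun s : ℝ => s ^ (-(1/2) : ℝ)) volume 0 1 :=
        intervalIntegral.intervalIntegrable_rpow' (by norm_num)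
      have i2 : IntervalIntegrable (fun s : ℝ => s ^ (5/2 : ℝ) * G (s • v) ^ 2) volume 0 1 := by
        apply Continuous.intervalIntegrable
        fun_prop
      have e1 : ∫ s in (0:ℝ)..1, s ^ (-(1/2) : ℝ) = 2 := by
        rw [integral_rpow]
        · norm_num
        · left; norm_num
      rw [← intervalIntegral.integral_of_le zero_le_one]
      have e2 : ε + 49 / (2 * ε) * ∫ s in (0:ℝ)..1, s ^ (5/2 : ℝ) * G (s • v) ^ 2
          = ∫ s in (0:ℝ)..1, (ε / 2 * s ^ (-(1/2) : ℝ) + 49 / (2 * ε) * (s ^ (5/2 : ℝ) * G (s • v) ^ 2)) := by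
        rw [intervalIntegral.integral_add (i1.const_mul _) (i2.const_mul _),
          intervalIntegral.integral_const_mul, intervalIntegral.integral_const_mul, e1]
        ring
      rw [e2, ← intervalIntegral.integral_const_mul]
      apply intervalIntegral.integral_mono_on_of_le_Ioo zero_le_one
      · apply Continuous.intervalIntegrable
        fun_prop
      · exact (i1.const_mul _).add (i2.const_mul _)
      · intro s hs
        have hs0 := hs.1
        set p := s ^ (-(1/2) : ℝ) with hp
        have hp0 : 0 < p := Real.rpow_pos_of_pos hs0 _
        have hq : s ^ (5/2 : ℝ) = s ^ 2 / p := by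
          rw [hp, ← Real.rpow_natCast, ← Real.rpow_sub hs0]; norm_num
        rw [hq]
        have : ε / 2 * p + 49 / (2 * ε) * (s ^ 2 / p * G (s • v) ^ 2) - 7 * (s * G (s • v))
            = (ε * p - 7 * (s * G (s • v))) ^ 2 / (2 * ε * p) := by
          field_simp
          ring
        have h0 : 0 ≤ (ε * p - 7 * (s * G (s • v))) ^ 2 / (2 * ε * p) := by positivity
        linarith
    have hfin : volume (Metric.ball (0 : E3) δ) ≠ ⊤ := measure_ball_lt_top.ne
    have ii : IntegrableOn (fun v : E3 => ∫ s in Set.Ioc (0:ℝ) 1, s ^ (5/2 : ℝ) * G (s • v) ^ 2)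
        (Metric.ball 0 δ) := hJ.integral_prod_left
    have ic : ∀ c : ℝ, IntegrableOn (fun _ : E3 => c) (Metric.ball 0 δ) :=
      fun c => integrableOn_const hfin
    have hm := setIntegral_mono_on (ic _)
      ((ic ε).add (ii.const_mul (49 / (2 * ε)))) measurableSet_ball hpt
    simp only [Pi.add_apply] at hm
    rw [integral_add (ic ε) (ii.const_mul (49 / (2 * ε))), integral_const_mul,
      setIntegral_const, setIntegral_const, smul_eq_mul, smul_eq_mul, ← hV] at hm
    have : 49 / (2 * ε) * (∫ v in Metric.ball (0 : E3) δ, ∫ s in Set.Ioc (0:ℝ) 1, s ^ (5/2 : ℝ) * G (s • v) ^ 2)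
        ≤ 49 / (2 * ε) * (2 * I) := mul_le_mul_of_nonneg_left hdouble (by positivity)
    have h4 : V * |u0| ≤ V * (ε + 49 * I / V / ε) := by
      have : V * (ε + 49 * I / V / ε) = V * ε + 49 / (2 * ε) * (2 * I) := by
        field_simp
      linarith
    exact le_of_mul_le_mul_left h4 hVpos
  set A := 49 * I / V with hA
  have hA0 : 0 ≤ A := by positivity
  rcases hA0.eq_or_lt with h | h
  · rw [← h]
    simp only [Real.sqrt_zero, mul_zero]
    apply le_of_forall_pos_le_add
    intro ε he
    have := hε ε he
    rw [← h] at this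
    simpa using this
  · have h5 := hε (√A) (Real.sqrt_pos.2 h)
    rw [Real.div_sqrt] at h5
    linarith

/-- spherical coordinates -/
def sphq (r a b : ℝ) : Fin 3 → ℝ := ![r * cos a * cos b, r * sin a * cos b, r * sin b]

def sphP (σ : Equiv.Perm (Fin 3)) (r a b : ℝ) : E3 := WithLp.toLp 2 (fun m => sphq r a b (σ m))

theorem sphP_norm (σ : Equiv.Perm (Fin 3)) (r a b : ℝ) (hr : 0 ≤ r) : ‖sphP σ r a b‖ = r := by
  rw [EuclideanSpace.norm_eq]
  have : ∑ i, ‖(sphP σ r a b) i‖ ^ 2 = ∑ i, ‖sphq r a b i‖ ^ 2 :=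
    Equiv.sum_comp σ (fun i => ‖sphq r a b i‖ ^ 2)
  rw [this, Real.sqrt_eq_iff_mul_self_eq (by positivity) hr]
  simp only [Fin.sum_univ_three, sphq, Real.norm_eq_abs, sq_abs]
  simp
  linear_combination ((r ^ 2 * cos b ^ 2)) * sin_sq_add_cos_sq a + r ^ 2 * sin_sq_add_cos_sq b

theorem aux_angle (a a' : ℝ) (hc : cos a = cos a') (hs : sin a = sin a') (h : |a - a'| < 1) :
    a = a' := by
  have h1 := Real.Angle.cos_sin_inj hc hs
  have h2 : cos (a - a') = 1 := by
    rw [cos_sub, hc, hs]; nlinarith [sin_sq_add_cos_sq a']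
  rw [abs_lt] at h
  have h3 := (Real.cos_eq_one_iff_of_lt_of_lt (by linarith [pi_gt_three]) (by linarith [pi_gt_three])).1 h2
  linarith

theorem sphP_inj (σ : Equiv.Perm (Fin 3)) {r a b r' a' b' : ℝ} (hr : 0 < r) (hr' : 0 < r')
    (hb : 0 < cos b) (hb' : 0 < cos b') (hab : |a - a'| < 1) (hbb : |b - b'| < 1)
    (h : sphP σ r a b = sphP σ r' a' b') : r = r' ∧ a = a' ∧ b = b' := by
  have e : r = r' := by
    rw [← sphP_norm σ r a b hr.le, h, sphP_norm σ r' a' b' hr'.le]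
  subst e
  have hq : ∀ n, sphq r a b n = sphq r a' b' n := by
    intro n
    have := congrArg (fun y : E3 => y (σ.symm n)) h
    simpa [sphP] using this
  have h0 := hq 0
  have h1 := hq 1
  have h2 := hq 2
  simp [sphq, hr.ne'] at h2
  have hcb : cos b = cos b' := by
    have : cos b ^ 2 = cos b' ^ 2 := by rw [cos_sq', cos_sq', h2]
    exact (sq_eq_sq₀ hb.le hb'.le).1 this
  have eb := aux_angle b b' hcb h2 hbb
  subst eb
  simp [sphq, hr.ne', hb.ne'] at h0 h1
  exact ⟨rfl, aux_angle a a' h0 h1 hab, rfl⟩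

theorem sph_exists (x : E3) (hx : 0 < ‖x‖) : ∃ (σ : Equiv.Perm (Fin 3)) (a b : ℝ),
    3 / 4 ≤ cos b ∧ x = sphP σ ‖x‖ a b := by
  obtain ⟨k, hk⟩ := Finite.exists_min (fun i : Fin 3 => (x i) ^ 2)
  set r := ‖x‖ with hr
  let σ : Equiv.Perm (Fin 3) := Equiv.swap 2 k
  have hσσ : ∀ m, σ (σ m) = m := fun m => by
    change (σ * σ) m = m
    simp only [σ, Equiv.swap_mul_self, Equiv.Perm.coe_one, id]
  have hσ2 : σ 2 = k := Equiv.swap_apply_left _ _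
  have hsum : x (σ 0) ^ 2 + x (σ 1) ^ 2 + x (σ 2) ^ 2 = r ^ 2 := by
    have h1 := EuclideanSpace.real_norm_sq_eq x
    rw [← Equiv.sum_comp σ, Fin.sum_univ_three] at h1
    rw [hr, h1]
  have h0 := hk (σ 0)
  have h1 := hk (σ 1)
  rw [← hσ2] at h0 h1
  set b := arcsin (x (σ 2) / r) with hb
  have hz2 : (x (σ 2) / r) ^ 2 ≤ 1 / 3 := by
    rw [div_pow, div_le_iff₀ (by positivity)]; linarith
  have hz3 : |x (σ 2) / r| ≤ 1 := by
    rw [← sq_le_one_iff_abs_le_one]; linarith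
  have hsb : sin b = x (σ 2) / r := sin_arcsin (abs_le.1 hz3).1 (abs_le.1 hz3).2
  have hcb : cos b = √(1 - (x (σ 2) / r) ^ 2) := cos_arcsin _
  have hcb34 : 3 / 4 ≤ cos b := by
    rw [hcb]; apply Real.le_sqrt_of_sq_le; linarith
  set z : ℂ := ⟨x (σ 0), x (σ 1)⟩ with hz
  have hzn : ‖z‖ = r * cos b := by
    rw [← sq_eq_sq₀ (norm_nonneg _) (by positivity), ← Complex.normSq_eq_norm_sq, Complex.normSq_mk,
      mul_pow, cos_sq', hsb]
    field_simp
    linarith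
  have hre : x (σ 0) = r * cos b * cos z.arg := by
    rw [← hzn, Complex.norm_mul_cos_arg]
  have him : x (σ 1) = r * cos b * sin z.arg := by
    rw [← hzn, Complex.norm_mul_sin_arg]
  refine ⟨σ, z.arg, b, hcb34, ?_⟩
  have key : ∀ n, x (σ n) = sphq r z.arg b n := by
    intro n
    fin_cases n
    · simp [sphq]; linarith
    · simp [sphq]; linarith
    · simp [sphq, hsb]; field_simp
  ext m
  have := key (σ m)
  rw [hσσ] at this
  simpa [sphP] using this

/-- Jacobian matrix of spherical coordinates -/
def sphJ (r a b : ℝ) : Matrix (Fin 3) (Fin 3) ℝ :=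
  !![cos a * cos b, -(r * sin a * cos b), -(r * cos a * sin b);
     sin a * cos b, r * cos a * cos b, -(r * sin a * sin b);
     sin b, 0, r * cos b]

theorem sphJ_det (r a b : ℝ) : (sphJ r a b).det = r ^ 2 * cos b := by
  rw [sphJ, Matrix.det_fin_three]
  simp
  linear_combination (r ^ 2 * cos b ^ 3 + r ^ 2 * cos b * sin b ^ 2) * sin_sq_add_cos_sq a
    + r ^ 2 * cos b * sin_sq_add_cos_sq b

def sphD (σ : Equiv.Perm (Fin 3)) (r a b : ℝ) : E3 →L[ℝ] E3 :=
  LinearMap.toContinuousLinearMap (Matrix.toLin (EuclideanSpace.basisFun (Fin 3) ℝ).toBasis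
    (EuclideanSpace.basisFun (Fin 3) ℝ).toBasis ((sphJ r a b).submatrix σ id))

theorem sphD_det (σ : Equiv.Perm (Fin 3)) (r a b : ℝ) (hb : 0 ≤ cos b) :
    |(sphD σ r a b).det| = r ^ 2 * cos b := by
  rw [sphD, ContinuousLinearMap.det, LinearMap.coe_toContinuousLinearMap, LinearMap.det_toLin,
    Matrix.det_permute, sphJ_det, abs_mul]
  have : |((Equiv.Perm.sign σ : ℤ) : ℝ)| = 1 := by
    rcases Int.units_eq_one_or (Equiv.Perm.sign σ) with h | h <;> simp [h]
  rw [this, one_mul, abs_of_nonneg (by positivity)]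

theorem sphD_apply (σ : Equiv.Perm (Fin 3)) (r a b : ℝ) (v : E3) (m : Fin 3) :
    (sphD σ r a b v) m = ∑ n, sphJ r a b (σ m) n * v n := by
  simp [sphD, Matrix.toLin_apply, Matrix.mulVec, dotProduct, Pi.single_apply]

def sphF (σ : Equiv.Perm (Fin 3)) (r0 a0 b0 : ℝ) (w : E3) : E3 :=
  sphP σ (r0 + w 0) (a0 + w 1) (b0 + w 2)

theorem sphF_hasFDerivAt (σ : Equiv.Perm (Fin 3)) (r0 a0 b0 : ℝ) (w : E3) :
    HasFDerivAt (sphF σ r0 a0 b0) (sphD σ (r0 + w 0) (a0 + w 1) (b0 + w 2)) w := by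
  have hp : ∀ (c : ℝ) (n : Fin 3), HasStrictFDerivAt (fun w : E3 => c + w n)
      (PiLp.proj 2 (fun _ : Fin 3 => ℝ) n : E3 →L[ℝ] ℝ) w := by
    intro c n
    exact ((PiLp.proj 2 (fun _ : Fin 3 => ℝ) n : E3 →L[ℝ] ℝ).hasStrictFDerivAt).const_add c
  have hr := hp r0 0
  have ha := hp a0 1
  have hb := hp b0 2
  apply HasStrictFDerivAt.hasFDerivAt
  rw [hasStrictFDerivAt_euclidean]
  intro m
  have key : ∀ t : Fin 3, ∀ L : E3 →L[ℝ] ℝ,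
      (∀ v : E3, L v = ∑ n, sphJ (r0 + w 0) (a0 + w 1) (b0 + w 2) t n * v n) →
      HasStrictFDerivAt (fun w : E3 => sphq (r0 + w 0) (a0 + w 1) (b0 + w 2) t) L w := by
    intro t L hL
    fin_cases t
    · refine HasStrictFDerivAt.congr_fderiv ((hr.mul ha.cos).mul hb.cos) ?_
      ext v
      rw [hL]
      simp [sphJ, Fin.sum_univ_three]
      ring
    · refine HasStrictFDerivAt.congr_fderiv ((hr.mul ha.sin).mul hb.cos) ?_
      ext v
      rw [hL]
      simp [sphJ, Fin.sum_univ_three]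
      ring
    · refine HasStrictFDerivAt.congr_fderiv (hr.mul hb.sin) ?_
      ext v
      rw [hL]
      simp [sphJ, Fin.sum_univ_three]
      ring
  exact key (σ m) _ (fun v => sphD_apply σ _ _ _ v m)

theorem sphF_continuous (σ : Equiv.Perm (Fin 3)) (r0 a0 b0 : ℝ) : Continuous (sphF σ r0 a0 b0) :=
  continuous_iff_continuousAt.2 fun w => (sphF_hasFDerivAt σ r0 a0 b0 w).continuousAt

theorem aux_coord (w : E3) (hw : w ∈ Metric.ball (0 : E3) (1 / 4)) (n : Fin 3) : |w n| < 1 / 4 := by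
  have := PiLp.norm_apply_le w n
  rw [Real.norm_eq_abs] at this
  rw [mem_ball_zero_iff] at hw
  linarith

theorem aux_cov (σ : Equiv.Perm (Fin 3)) (R r0 a0 b0 : ℝ) (hR : 1 < R) (h1 : R / 2 < r0)
    (h2 : r0 < R) (hb : 3 / 4 ≤ cos b0) (F : E3 → ℝ) (hF : Continuous F) (hF0 : ∀ y, 0 ≤ F y) :
    ∫ w in Metric.ball (0 : E3) (1 / 4), F (sphF σ r0 a0 b0 w) ≤
      32 * (R⁻¹) ^ 2 * ∫ y in {y : E3 | R / 4 < ‖y‖ ∧ ‖y‖ < 2 * R}, F y := by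
  have hco := aux_coord
  have hrb : ∀ w ∈ Metric.ball (0 : E3) (1 / 4), R / 4 < r0 + w 0 ∧ r0 + w 0 < 2 * R := by
    intro w hw
    have := abs_lt.1 (hco w hw 0)
    constructor <;> linarith [this.1, this.2]
  have hcb : ∀ w ∈ Metric.ball (0 : E3) (1 / 4), 1 / 2 ≤ cos (b0 + w 2) := by
    intro w hw
    have h3 := hco w hw 2
    have h4 := abs_cos_sub_cos_le (b0 + w 2) b0
    rw [add_sub_cancel_left] at h4
    linarith [(abs_le.1 h4).1]
  have hinj : InjOn (sphF σ r0 a0 b0) (Metric.ball (0 : E3) (1 / 4)) := by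
    intro w hw w' hw' h
    have c := fun n => abs_lt.1 (hco w hw n)
    have c' := fun n => abs_lt.1 (hco w' hw' n)
    have := sphP_inj σ (by linarith [(hrb w hw).1]) (by linarith [(hrb w' hw').1])
      (by linarith [hcb w hw]) (by linarith [hcb w' hw'])
      (by rw [abs_lt]; constructor <;> linarith [(c 1).1, (c 1).2, (c' 1).1, (c' 1).2])
      (by rw [abs_lt]; constructor <;> linarith [(c 2).1, (c 2).2, (c' 2).1, (c' 2).2]) h
    ext n
    fin_cases n
    · simpa using this.1
    · simpa using this.2.1
    · simpa using this.2.2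
  have hcv := integral_image_eq_integral_abs_det_fderiv_smul volume measurableSet_ball
    (fun w _ => (sphF_hasFDerivAt σ r0 a0 b0 w).hasFDerivWithinAt) hinj F
  have hAi : IntegrableOn F {y : E3 | R / 4 < ‖y‖ ∧ ‖y‖ < 2 * R} := by
    apply (ContinuousOn.integrableOn_compact (K := Metric.closedBall 0 (2 * R))
      (isCompact_closedBall _ _) hF.continuousOn).mono_set
    intro y hy
    simpa using hy.2.le
  have hsub : sphF σ r0 a0 b0 '' Metric.ball (0 : E3) (1 / 4) ⊆ {y : E3 | R / 4 < ‖y‖ ∧ ‖y‖ < 2 * R} := by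
    rintro _ ⟨w, hw, rfl⟩
    simp only [Set.mem_ofPred_eq, sphF]
    rw [sphP_norm _ _ _ _ (by linarith [(hrb w hw).1])]
    exact hrb w hw
  have hle : ∫ y in sphF σ r0 a0 b0 '' Metric.ball (0 : E3) (1 / 4), F y ≤
      ∫ y in {y : E3 | R / 4 < ‖y‖ ∧ ‖y‖ < 2 * R}, F y :=
    setIntegral_mono_set hAi (Filter.Eventually.of_forall hF0) (LE.le.eventuallyLE hsub)
  have hint2 : IntegrableOn (fun w => |(sphD σ (r0 + w 0) (a0 + w 1) (b0 + w 2)).det| •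
      F (sphF σ r0 a0 b0 w)) (Metric.ball (0 : E3) (1 / 4)) :=
    (integrableOn_image_iff_integrableOn_abs_det_fderiv_smul volume measurableSet_ball
    (fun w _ => (sphF_hasFDerivAt σ r0 a0 b0 w).hasFDerivWithinAt) hinj F).1 (hAi.mono_set hsub)
  have hint1 : IntegrableOn (fun w => R ^ 2 / 32 * F (sphF σ r0 a0 b0 w))
      (Metric.ball (0 : E3) (1 / 4)) := by
    have := hF.comp (sphF_continuous σ r0 a0 b0)
    simp only [Function.comp_def] at this
    apply (ContinuousOn.integrableOn_compact (K := Metric.closedBall 0 (1/4))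
      (isCompact_closedBall _ _) (continuous_const.mul this).continuousOn).mono_set Metric.ball_subset_closedBall
  have hlow : ∫ w in Metric.ball (0 : E3) (1 / 4), R ^ 2 / 32 * F (sphF σ r0 a0 b0 w) ≤
      ∫ w in Metric.ball (0 : E3) (1 / 4), |(sphD σ (r0 + w 0) (a0 + w 1) (b0 + w 2)).det| •
      F (sphF σ r0 a0 b0 w) := by
    apply setIntegral_mono_on hint1 hint2 measurableSet_ball
    intro w hw
    have h3 := hcb w hw
    have h4 := (hrb w hw).1
    rw [sphD_det _ _ _ _ (by linarith), smul_eq_mul]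
    apply mul_le_mul_of_nonneg_right _ (hF0 _)
    have h5 : R ^ 2 / 16 ≤ (r0 + w 0) ^ 2 := by nlinarith
    nlinarith [sq_nonneg (r0 + w 0)]
  rw [integral_const_mul, ← hcv] at hlow
  have h6 := hlow.trans hle
  have hR0 : 0 < R := by linarith
  calc _ = 32 * (R⁻¹) ^ 2 * (R ^ 2 / 32 * ∫ w in Metric.ball (0 : E3) (1 / 4), F (sphF σ r0 a0 b0 w)) := by
        field_simp
    _ ≤ _ := mul_le_mul_of_nonneg_left h6 (by positivity)

theorem sd_contDiff (i : Fin 3) (f : E3 → ℝ) (hf : ContDiff ℝ (⊤ : ℕ∞) f) :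
    ContDiff ℝ (⊤ : ℕ∞) (sd i f) := by
  have h1 : ContDiff ℝ (⊤ : ℕ∞) (fderiv ℝ f) := hf.fderiv_right (by simp)
  exact h1.clm_apply contDiff_const

theorem rotS_contDiff (i j : Fin 3) (f : E3 → ℝ) (hf : ContDiff ℝ (⊤ : ℕ∞) f) :
    ContDiff ℝ (⊤ : ℕ∞) (rotS i j f) := by
  have hp : ∀ n : Fin 3, ContDiff ℝ (⊤ : ℕ∞) (fun x : E3 => x n) := fun n =>
    (PiLp.proj 2 (fun _ : Fin 3 => ℝ) n : E3 →L[ℝ] ℝ).contDiff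
  exact ((hp i).mul (sd_contDiff j f hf)).sub ((hp j).mul (sd_contDiff i f hf))

theorem zS_contDiff (k : Fin 6) (f : E3 → ℝ) (hf : ContDiff ℝ (⊤ : ℕ∞) f) :
    ContDiff ℝ (⊤ : ℕ∞) (zS k f) := by
  fin_cases k
  · exact rotS_contDiff 0 1 f hf
  · exact rotS_contDiff 0 2 f hf
  · exact rotS_contDiff 1 2 f hf
  · exact sd_contDiff 0 f hf
  · exact sd_contDiff 1 f hf
  · exact sd_contDiff 2 f hf

theorem zSW_contDiff (h : E3 → ℝ) (hf : ContDiff ℝ (⊤ : ℕ∞) h) :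
    ∀ {n : ℕ} (μ : Fin n → Fin 6), ContDiff ℝ (⊤ : ℕ∞) (zSW μ h) := by
  intro n
  induction n with
  | zero => intro μ; exact hf
  | succ n ih => intro μ; exact zS_contDiff (μ 0) _ (ih fun i => μ i.succ)

theorem rotS_eq (p q : Fin 3) (hpq : p ≠ q) : ∃ (m : Fin 6) (ε : ℝ), |ε| ≤ 1 ∧
    ∀ f y, rotS p q f y = ε * zS m f y := by
  have hsw : ∀ p q f y, rotS p q f y = -1 * rotS q p f y := by
    intro p q f y
    simp only [rotS]; ring
  fin_cases p <;> fin_cases q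
  · exact absurd rfl hpq
  · exact ⟨0, 1, by simp, fun f y => (one_mul _).symm⟩
  · exact ⟨1, 1, by simp, fun f y => (one_mul _).symm⟩
  · exact ⟨0, -1, by simp, fun f y => hsw _ _ _ _⟩
  · exact absurd rfl hpq
  · exact ⟨2, 1, by simp, fun f y => (one_mul _).symm⟩
  · exact ⟨1, -1, by simp, fun f y => hsw _ _ _ _⟩
  · exact ⟨2, -1, by simp, fun f y => hsw _ _ _ _⟩
  · exact absurd rfl hpq

theorem sd_eq (p : Fin 3) : ∃ (m : Fin 6) (ε : ℝ), |ε| ≤ 1 ∧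
    ∀ f y, sd p f y = ε * zS m f y := by
  fin_cases p
  · exact ⟨3, 1, by simp, fun f y => (one_mul _).symm⟩
  · exact ⟨4, 1, by simp, fun f y => (one_mul _).symm⟩
  · exact ⟨5, 1, by simp, fun f y => (one_mul _).symm⟩

/-- the coefficients of the tangent vector of the curve in the frame -/
def sphW (a0 b0 : ℝ) (v : E3) (s : ℝ) : Fin 6 → ℝ :=
  ![v 0 * (cos (a0 + s * v 1) * cos (b0 + s * v 2)), v 0 * (sin (a0 + s * v 1) * cos (b0 + s * v 2)),
    v 0 * sin (b0 + s * v 2), v 1, v 2 * cos (a0 + s * v 1), v 2 * sin (a0 + s * v 1)]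

def sphW' (a0 b0 : ℝ) (v : E3) (s : ℝ) : Fin 6 → ℝ :=
  ![v 0 * (-sin (a0 + s * v 1) * v 1 * cos (b0 + s * v 2)
      + cos (a0 + s * v 1) * (-sin (b0 + s * v 2) * v 2)),
    v 0 * (cos (a0 + s * v 1) * v 1 * cos (b0 + s * v 2)
      + sin (a0 + s * v 1) * (-sin (b0 + s * v 2) * v 2)),
    v 0 * (cos (b0 + s * v 2) * v 2), 0, v 2 * (-sin (a0 + s * v 1) * v 1),
    v 2 * (cos (a0 + s * v 1) * v 1)]

theorem sphW_deriv (a0 b0 : ℝ) (v : E3) (s : ℝ) (l : Fin 6) :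
    HasDerivAt (fun s => sphW a0 b0 v s l) (sphW' a0 b0 v s l) s := by
  have hl : ∀ c d : ℝ, HasDerivAt (fun s : ℝ => c + s * d) d s := by
    intro c d
    simpa using ((hasDerivAt_id s).mul_const d).const_add c
  have ha := hl a0 (v 1)
  have hb := hl b0 (v 2)
  fin_cases l
  · exact (ha.cos.mul hb.cos).const_mul (v 0)
  · exact (ha.sin.mul hb.cos).const_mul (v 0)
  · exact hb.sin.const_mul (v 0)
  · exact hasDerivAt_const s (v 1)
  · exact ha.cos.const_mul (v 2)
  · exact ha.sin.const_mul (v 2)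

theorem aux_mul1 {x y : ℝ} (hx : |x| ≤ 1) (hy : |y| ≤ 1) : |x * y| ≤ 1 := by
  rw [abs_mul]; exact mul_le_one₀ hx (abs_nonneg _) hy

theorem sphW_bound (a0 b0 : ℝ) (v : E3) (hv : ∀ n, |v n| ≤ 1) (s : ℝ) (l : Fin 6) :
    |sphW a0 b0 v s l| ≤ 1 := by
  have c := abs_cos_le_one
  have d := abs_sin_le_one
  fin_cases l
  · exact aux_mul1 (hv 0) (aux_mul1 (c _) (c _))
  · exact aux_mul1 (hv 0) (aux_mul1 (d _) (c _))
  · exact aux_mul1 (hv 0) (d _)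
  · exact hv 1
  · exact aux_mul1 (hv 2) (c _)
  · exact aux_mul1 (hv 2) (d _)

theorem sphW'_bound (a0 b0 : ℝ) (v : E3) (hv : ∀ n, |v n| ≤ 1) (s : ℝ) (l : Fin 6) :
    |sphW' a0 b0 v s l| ≤ 2 := by
  have c := abs_cos_le_one
  have d := abs_sin_le_one
  have d' : ∀ t, |-sin t| ≤ 1 := fun t => by rw [abs_neg]; exact d t
  have add2 : ∀ x y z : ℝ, |x| ≤ 1 → |y| ≤ 1 → |z| ≤ 1 → |x * (y + z)| ≤ 2 := by
    intro x y z hx hy hz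
    rw [abs_mul]
    have := abs_add_le y z
    nlinarith [abs_nonneg x, abs_nonneg (y + z)]
  have one2 : ∀ x : ℝ, |x| ≤ 1 → |x| ≤ 2 := fun x hx => by linarith
  fin_cases l
  · exact add2 _ _ _ (hv 0) (aux_mul1 (aux_mul1 (d' _) (hv 1)) (c _))
      (aux_mul1 (c _) (aux_mul1 (d' _) (hv 2)))
  · exact add2 _ _ _ (hv 0) (aux_mul1 (aux_mul1 (c _) (hv 1)) (c _))
      (aux_mul1 (d _) (aux_mul1 (d' _) (hv 2)))
  · exact one2 _ (aux_mul1 (hv 0) (aux_mul1 (c _) (hv 2)))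
  · simp [sphW']
  · exact one2 _ (aux_mul1 (hv 2) (aux_mul1 (d' _) (hv 1)))
  · exact one2 _ (aux_mul1 (hv 2) (aux_mul1 (c _) (hv 1)))

theorem fderiv_eq_sum (f : E3 → ℝ) (y Y : E3) : fderiv ℝ f y Y = ∑ m, Y m * sd m f y := by
  have hY : Y = ∑ m, Y m • (EuclideanSpace.single m (1 : ℝ) : E3) := by
    have := (EuclideanSpace.basisFun (Fin 3) ℝ).sum_repr Y
    simpa using this.symm
  conv_lhs => rw [hY]
  simp [map_sum, sd]

theorem chain_raw (σ : Equiv.Perm (Fin 3)) (r0 a0 b0 : ℝ) (v : E3) (f : E3 → ℝ)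
    (hf : ContDiff ℝ (⊤ : ℕ∞) f) (s : ℝ) :
    HasDerivAt (fun s : ℝ => f (sphF σ r0 a0 b0 (s • v)))
      (sphW a0 b0 v s 0 * sd (σ.symm 0) f (sphF σ r0 a0 b0 (s • v))
      + sphW a0 b0 v s 1 * sd (σ.symm 1) f (sphF σ r0 a0 b0 (s • v))
      + sphW a0 b0 v s 2 * sd (σ.symm 2) f (sphF σ r0 a0 b0 (s • v))
      + sphW a0 b0 v s 3 * rotS (σ.symm 0) (σ.symm 1) f (sphF σ r0 a0 b0 (s • v))
      + sphW a0 b0 v s 4 * rotS (σ.symm 0) (σ.symm 2) f (sphF σ r0 a0 b0 (s • v))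
      + sphW a0 b0 v s 5 * rotS (σ.symm 1) (σ.symm 2) f (sphF σ r0 a0 b0 (s • v))) s := by
  have hl : HasDerivAt (fun s : ℝ => s • v) v s := by
    simpa using (hasDerivAt_id s).smul_const v
  have hfd : HasFDerivAt f (fderiv ℝ f (sphF σ r0 a0 b0 (s • v))) (sphF σ r0 a0 b0 (s • v)) :=
    ((hf.differentiable (by simp)) _).hasFDerivAt
  have h1 := hfd.comp_hasDerivAt s ((sphF_hasFDerivAt σ r0 a0 b0 (s • v)).comp_hasDerivAt s hl)
  refine HasDerivAt.congr_deriv h1 ?_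
  rw [fderiv_eq_sum, ← Equiv.sum_comp σ.symm]
  have hy : ∀ n, (sphF σ r0 a0 b0 (s • v)) (σ.symm n)
      = sphq (r0 + s * v 0) (a0 + s * v 1) (b0 + s * v 2) n := by
    intro n
    simp [sphF, sphP]
  set y := sphF σ r0 a0 b0 (s • v) with hyy
  simp only [sphD_apply, Equiv.apply_symm_apply, rotS, hy, Fin.sum_univ_three]
  simp [sphJ, sphq, sphW]
  set A := a0 + s * v 1
  set B := b0 + s * v 2
  linear_combination (sd (σ.symm 2) f y * (r0 + s * v 0) * v 2 * cos B) * (-sin_sq_add_cos_sq A)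

theorem chain_frame (σ : Equiv.Perm (Fin 3)) : ∃ (T : Fin 6 → Fin 6) (e : Fin 6 → ℝ),
    (∀ l, |e l| ≤ 1) ∧ ∀ (r0 a0 b0 : ℝ) (v : E3) (f : E3 → ℝ), ContDiff ℝ (⊤ : ℕ∞) f → ∀ s : ℝ,
    HasDerivAt (fun s : ℝ => f (sphF σ r0 a0 b0 (s • v)))
      (∑ l, sphW a0 b0 v s l * (e l * zS (T l) f (sphF σ r0 a0 b0 (s • v)))) s := by
  obtain ⟨m0, e0, b0, h0⟩ := sd_eq (σ.symm 0)
  obtain ⟨m1, e1, b1, h1⟩ := sd_eq (σ.symm 1)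
  obtain ⟨m2, e2, b2, h2⟩ := sd_eq (σ.symm 2)
  obtain ⟨m3, e3, b3, h3⟩ := rotS_eq (σ.symm 0) (σ.symm 1) (by simp)
  obtain ⟨m4, e4, b4, h4⟩ := rotS_eq (σ.symm 0) (σ.symm 2) (by simp)
  obtain ⟨m5, e5, b5, h5⟩ := rotS_eq (σ.symm 1) (σ.symm 2) (by simp)
  refine ⟨![m0, m1, m2, m3, m4, m5], ![e0, e1, e2, e3, e4, e5], ?_, ?_⟩
  · intro l
    fin_cases l
    · exact b0
    · exact b1
    · exact b2
    · exact b3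
    · exact b4
    · exact b5
  · intro r0 a0 b0 v f hf s
    refine HasDerivAt.congr_deriv (chain_raw σ r0 a0 b0 v f hf s) ?_
    rw [h0, h1, h2, h3, h4, h5, Fin.sum_univ_six]
    rfl

/-- index set of all words of length at most two -/
def wordS : Finset (Σ n : ℕ, (Fin n → Fin 6)) :=
  (Finset.range 3).sigma (fun n => (Finset.univ : Finset (Fin n → Fin 6)))

def sumM (h : E3 → ℝ) (y : E3) : ℝ := ∑ p ∈ wordS, |zSW p.2 h y|

theorem sumM_ge (h : E3 → ℝ) (y : E3) (n : ℕ) (hn : n < 3) (μ : Fin n → Fin 6) :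
    |zSW μ h y| ≤ sumM h y := by
  apply Finset.single_le_sum (f := fun p : (Σ n : ℕ, (Fin n → Fin 6)) => |zSW p.2 h y|)
    (fun p _ => abs_nonneg _) (a := ⟨n, μ⟩)
  simp [wordS, hn]

theorem sumM_continuous (h : E3 → ℝ) (hf : ContDiff ℝ (⊤ : ℕ∞) h) : Continuous (sumM h) := by
  unfold sumM
  exact continuous_finsetSum _ fun p _ => (zSW_contDiff h hf p.2).continuous.abs

theorem sumM_nonneg (h : E3 → ℝ) (y : E3) : 0 ≤ sumM h y :=
  Finset.sum_nonneg fun _ _ => abs_nonneg _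

theorem aux_sum6 (F : Fin 6 → ℝ) (B : ℝ) (h : ∀ l, |F l| ≤ B) : |∑ l, F l| ≤ 6 * B := by
  refine (Finset.abs_sum_le_sum_abs _ _).trans ?_
  refine (Finset.sum_le_sum fun l _ => h l).trans ?_
  simp

theorem curve_bound (σ : Equiv.Perm (Fin 3)) (r0 a0 b0 : ℝ) (h : E3 → ℝ)
    (hf : ContDiff ℝ (⊤ : ℕ∞) h) (v : E3) (hv : ∀ n, |v n| ≤ 1) :
    |h (sphF σ r0 a0 b0 0)| ≤ 7 * ∫ s in (0:ℝ)..1, s * (48 * sumM h (sphF σ r0 a0 b0 (s • v))) := by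
  obtain ⟨T, e, he, hch⟩ := chain_frame σ
  have hd := hch r0 a0 b0 v
  set y : ℝ → E3 := fun s => sphF σ r0 a0 b0 (s • v) with hy
  have hyc : Continuous y := (sphF_continuous σ r0 a0 b0).comp (by fun_prop)
  have hWc : ∀ l, Continuous fun s => sphW a0 b0 v s l := fun l =>
    continuous_iff_continuousAt.2 fun s => (sphW_deriv a0 b0 v s l).continuousAt
  have hW'c : ∀ l, Continuous fun s => sphW' a0 b0 v s l := by
    intro l
    fin_cases l <;> simp [sphW'] <;> fun_prop
  have hZ1 : ∀ l, ContDiff ℝ (⊤ : ℕ∞) (zS (T l) h) := fun l => zS_contDiff _ _ hf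
  have hZ2 : ∀ l l', ContDiff ℝ (⊤ : ℕ∞) (zS (T l') (zS (T l) h)) := fun l l' => zS_contDiff _ _ (hZ1 l)
  have m0 : ∀ s, |h (y s)| ≤ sumM h (y s) := fun s => sumM_ge h (y s) 0 (by norm_num) ![]
  have m1 : ∀ l s, |zS l h (y s)| ≤ sumM h (y s) := fun l s =>
    sumM_ge h (y s) 1 (by norm_num) ![l]
  have m2 : ∀ l l' s, |zS l' (zS l h) (y s)| ≤ sumM h (y s) := fun l l' s =>
    sumM_ge h (y s) 2 (by norm_num) ![l', l]
  have mul1 : ∀ x z B : ℝ, |x| ≤ 1 → |z| ≤ B → |x * z| ≤ B := by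
    intro x z B hx hz
    rw [abs_mul]
    nlinarith [abs_nonneg x, abs_nonneg z]
  have hM0 : ∀ s, 0 ≤ sumM h (y s) := fun s => sumM_nonneg h _
  have key := aux_oneD_bound (fun s => h (y s))
    (fun s => ∑ l, sphW a0 b0 v s l * (e l * zS (T l) h (y s)))
    (fun s => ∑ l, (sphW' a0 b0 v s l * (e l * zS (T l) h (y s)) + sphW a0 b0 v s l *
      (e l * ∑ l', sphW a0 b0 v s l' * (e l' * zS (T l') (zS (T l) h) (y s)))))
    (fun s => 48 * sumM h (y s)) (hd h hf) ?_ ?_ ?_ ?_ ?_ ?_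
  · simpa [hy] using key
  · intro s
    apply HasDerivAt.fun_sum
    intro l _
    exact (sphW_deriv a0 b0 v s l).mul ((hd _ (hZ1 l) s).const_mul (e l))
  · apply continuous_finsetSum
    intro l _
    refine ((hW'c l).mul (continuous_const.mul ((hZ1 l).continuous.comp hyc))).add
      ((hWc l).mul (continuous_const.mul (continuous_finsetSum _ fun l' _ => ?_)))
    exact (hWc l').mul (continuous_const.mul ((hZ2 l l').continuous.comp hyc))
  · exact continuous_const.mul ((sumM_continuous h hf).comp hyc)
  · intro s
    linarith [m0 s, hM0 s]
  · intro s
    have := aux_sum6 (fun l => sphW a0 b0 v s l * (e l * zS (T l) h (y s))) (sumM h (y s))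
      (fun l => mul1 _ _ _ (sphW_bound a0 b0 v hv s l) (mul1 _ _ _ (he l) (m1 _ s)))
    linarith [hM0 s]
  · intro s
    have := aux_sum6 (fun l => (sphW' a0 b0 v s l * (e l * zS (T l) h (y s)) + sphW a0 b0 v s l *
      (e l * ∑ l', sphW a0 b0 v s l' * (e l' * zS (T l') (zS (T l) h) (y s))))) (8 * sumM h (y s)) ?_
    · linarith
    · intro l
      refine (abs_add_le _ _).trans ?_
      have h1 : |sphW' a0 b0 v s l * (e l * zS (T l) h (y s))| ≤ 2 * sumM h (y s) := by
        rw [abs_mul]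
        exact mul_le_mul (sphW'_bound a0 b0 v hv s l) (mul1 _ _ _ (he l) (m1 _ s))
          (abs_nonneg _) (by norm_num)
      have h2 := mul1 _ _ _ (sphW_bound a0 b0 v hv s l) (mul1 _ _ _ (he l)
        (aux_sum6 (fun l' => sphW a0 b0 v s l' * (e l' * zS (T l') (zS (T l) h) (y s))) (sumM h (y s))
        (fun l' => mul1 _ _ _ (sphW_bound a0 b0 v hv s l') (mul1 _ _ _ (he l') (m2 _ _ s)))))
      linarith

theorem sqrt_sum_le_sum_sqrt {ι : Type*} (S : Finset ι) (f : ι → ℝ) (hf : ∀ i, 0 ≤ f i) :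
    √(∑ i ∈ S, f i) ≤ ∑ i ∈ S, √(f i) := by
  classical
  induction S using Finset.induction_on with
  | empty => simp
  | insert a S ha ih =>
    rw [Finset.sum_insert ha, Finset.sum_insert ha]
    have h1 := Real.sqrt_nonneg (f a)
    have h2 := Real.sqrt_nonneg (∑ i ∈ S, f i)
    have h3 := Real.sq_sqrt (hf a)
    have h4 := Real.sq_sqrt (Finset.sum_nonneg fun i (_ : i ∈ S) => hf i)
    have h5 : √(f a + ∑ i ∈ S, f i) ≤ √(f a) + √(∑ i ∈ S, f i) := by
      apply Real.sqrt_le_iff.2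
      constructor
      · positivity
      · nlinarith [mul_nonneg h1 h2]
    linarith

theorem sumM_L2 (h : E3 → ℝ) (hf : ContDiff ℝ (⊤ : ℕ∞) h) (R : ℝ) :
    √(∫ y in {y : E3 | R / 4 < ‖y‖ ∧ ‖y‖ < 2 * R}, sumM h y ^ 2) ≤
      √(wordS.card) * ∑ n ∈ Finset.range 3, ∑ μ : Fin n → Fin 6,
        √(∫ y in {y : E3 | R / 4 < ‖y‖ ∧ ‖y‖ < 2 * R}, (zSW μ h y) ^ 2) := by
  have hAi : ∀ F : E3 → ℝ, Continuous F → IntegrableOn F {y : E3 | R / 4 < ‖y‖ ∧ ‖y‖ < 2 * R} := by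
    intro F hF
    apply (ContinuousOn.integrableOn_compact (K := Metric.closedBall 0 (2 * R))
      (isCompact_closedBall _ _) hF.continuousOn).mono_set
    intro y hy
    simpa using hy.2.le
  have hsq : ∀ p : (Σ n : ℕ, (Fin n → Fin 6)), Continuous fun y => zSW p.2 h y ^ 2 :=
    fun p => (zSW_contDiff h hf p.2).continuous.pow 2
  have h1 : ∫ y in {y : E3 | R / 4 < ‖y‖ ∧ ‖y‖ < 2 * R}, sumM h y ^ 2 ≤
      wordS.card * ∑ p ∈ wordS, ∫ y in {y : E3 | R / 4 < ‖y‖ ∧ ‖y‖ < 2 * R}, (zSW p.2 h y) ^ 2 := by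
    rw [← integral_finsetSum _ (fun p _ => hAi _ (hsq p)), ← integral_const_mul]
    apply integral_mono
    · exact hAi _ ((sumM_continuous h hf).pow 2)
    · exact hAi _ (continuous_const.mul (continuous_finsetSum _ fun p _ => hsq p))
    · intro y
      have := sq_sum_le_card_mul_sum_sq (s := wordS) (f := fun p => |zSW p.2 h y|)
      simp only [sq_abs] at this
      exact this
  have h2 := sqrt_sum_le_sum_sqrt wordS
    (fun p => ∫ y in {y : E3 | R / 4 < ‖y‖ ∧ ‖y‖ < 2 * R}, (zSW p.2 h y) ^ 2)
    (fun p => integral_nonneg fun _ => sq_nonneg _)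
  refine (Real.sqrt_le_sqrt h1).trans ?_
  rw [Real.sqrt_mul (by positivity)]
  apply mul_le_mul_of_nonneg_left _ (Real.sqrt_nonneg _)
  refine h2.trans (le_of_eq ?_)
  rw [wordS, Finset.sum_sigma]

/-- weighted Sobolev estimate
`sup_{R/2<|x|<R} |h| ≤ C R⁻¹ Σ_{|α|≤2} ‖Z^α h‖_{L²(R/4<|x|<2R)}`. -/
theorem stmt_8 :
    ∃ C : ℝ, 0 < C ∧
      ∀ h : E3 → ℝ, ContDiff ℝ (⊤ : ℕ∞) h →
        ∀ R : ℝ, 1 < R → ∀ x : E3, R / 2 < ‖x‖ → ‖x‖ < R →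
          |h x| ≤ C * R⁻¹ *
            ∑ n ∈ Finset.range 3, ∑ μ : Fin n → Fin 6,
              Real.sqrt (∫ y in {y : E3 | R / 4 < ‖y‖ ∧ ‖y‖ < 2 * R}, (zSW μ h y) ^ 2) := by
  set V := volume.real (Metric.ball (0 : E3) (1 / 4)) with hV
  have hVpos : 0 < V := by
    rw [hV, measureReal_def]
    exact ENNReal.toReal_pos (Metric.measure_ball_pos _ _ (by norm_num)).ne' measure_ball_lt_top.ne
  set K := 49 * (48 ^ 2 * 32) / V with hK
  have hKpos : 0 < K := by positivity
  refine ⟨2 * √K * √(wordS.card) + 1, by positivity, ?_⟩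
  intro h hf R hR x hx1 hx2
  have hR0 : 0 < R := by linarith
  obtain ⟨σ, a0, b0, hb, hx⟩ := sph_exists x (by linarith)
  have hx0 : sphF σ ‖x‖ a0 b0 0 = x := by
    rw [sphF]; simp [← hx]
  have hFc : Continuous fun w => sumM h (sphF σ ‖x‖ a0 b0 w) :=
    (sumM_continuous h hf).comp (sphF_continuous σ ‖x‖ a0 b0)
  have h1 := aux_sob (1 / 4) (by norm_num) (h x) (fun w => 48 * sumM h (sphF σ ‖x‖ a0 b0 w))
    (continuous_const.mul hFc) (by
      intro v hv
      have := curve_bound σ ‖x‖ a0 b0 h hf v (fun n => by linarith [aux_coord v hv n])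
      rwa [hx0] at this)
  have h2 := aux_cov σ R ‖x‖ a0 b0 hR hx1 hx2 hb (fun y => sumM h y ^ 2)
    ((sumM_continuous h hf).pow 2) (fun _ => sq_nonneg _)
  have h3 := sumM_L2 h hf R
  set J := ∫ y in {y : E3 | R / 4 < ‖y‖ ∧ ‖y‖ < 2 * R}, sumM h y ^ 2 with hJ
  set Q := ∑ n ∈ Finset.range 3, ∑ μ : Fin n → Fin 6,
    √(∫ y in {y : E3 | R / 4 < ‖y‖ ∧ ‖y‖ < 2 * R}, (zSW μ h y) ^ 2) with hQ
  have hQ0 : 0 ≤ Q := Finset.sum_nonneg fun _ _ => Finset.sum_nonneg fun _ _ => Real.sqrt_nonneg _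
  have h4 : 49 * (∫ w in Metric.ball (0 : E3) (1 / 4), (48 * sumM h (sphF σ ‖x‖ a0 b0 w)) ^ 2) / V
      ≤ K * ((R⁻¹) ^ 2 * J) := by
    simp only [mul_pow]
    rw [integral_const_mul, hK, div_mul_eq_mul_div]
    apply div_le_div_of_nonneg_right _ hVpos.le
    nlinarith [h2]
  have h5 : √(K * ((R⁻¹) ^ 2 * J)) = √K * (R⁻¹ * √J) := by
    rw [Real.sqrt_mul hKpos.le, Real.sqrt_mul (by positivity), Real.sqrt_sq (by positivity)]
  have h6 := Real.sqrt_le_sqrt h4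
  rw [h5] at h6
  have h7 : √K * (R⁻¹ * √J) ≤ √K * (R⁻¹ * (√(wordS.card) * Q)) := by gcongr
  have h8 : 0 ≤ R⁻¹ * Q := by positivity
  calc |h x| ≤ 2 * (√K * (R⁻¹ * (√(wordS.card) * Q))) := by linarith
    _ = (2 * √K * √(wordS.card)) * R⁻¹ * Q := by ring
    _ ≤ _ := by nlinarith
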